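/- Let r, s ≥ 0 and let (n_1,m_1),…,(n_r,m_r) and (n'_1,m'_1),…,(n'_s,m'_s) be pairs of indices in {1,…,N}. If the multiset {n_1,…,n_r} differs from the multiset {n'_1,…,n'_s}, or the multiset {m_1,…,m_r} differs from the multiset {m'_1,…,m'_s}, then ∫_{M_N(ℂ)} Φ_{n_1m_1}⋯Φ_{n_rm_r}·conj(Φ_{n'_1m'_1})⋯conj(Φ_{n'_sm'_s})·exp(−N·S(Φ)) dΦ = 0, the integral being absolutely convergent. In particular every moment of the LSZ model in which the number of Φ-factors differs from the number of Φ†-factors vanishes. -/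

import Mathlib

/-!
The action is invariant under `Φ ↦ (d_a e_b Φ_{ab})` with unimodular `d`, `e`: the quadratic part
sees only `|Φ_{ab}|`, and each summand of the quartic trace contains every phase together with its
conjugate (`lszAction_phase`). Lebesgue measure is invariant as well (`measurePreserving_phase`),
while the monomial picks up the factor `∏ d (n i) e (m i) · ∏ conj (d (n' j) e (m' j))`. If some
index `a` occurs `k` times among the rows of the `Φ`-factors and `l ≠ k` times among those of the
conjugate factors, then the choice `d_a = exp (iπ/(k - l))`, all other phases being `1`, makes this
factor `-1`, so the integral equals its own negative; columns are treated in the same way.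

Absolute convergence: the quartic term is nonnegative, so the integrand is dominated by
a product over the matrix entries of functions `(1 + |z|)^k exp (-c|z|²)` with `c > 0`, each of
which is integrable on `ℂ`.
-/

open MeasureTheory Matrix

/-- The LSZ action `S(Φ) = Σ_{m,n} (E_n + Ẽ_m)|Φ_{nm}|² + (λ/2)·Tr((Φ*Φ)²)`,
viewed as a complex number. -/
noncomputable def lszAction (N : ℕ) (E Et : Fin N → ℝ) (lam : ℝ)
    (Φ : Fin N → Fin N → ℂ) : ℂ :=
  (∑ n, ∑ m, (((E n + Et m : ℝ)) : ℂ) * ((Complex.normSq (Φ n m) : ℝ) : ℂ))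
    + ((lam / 2 : ℝ) : ℂ) *
      ((((Matrix.of Φ)ᴴ * Matrix.of Φ) * ((Matrix.of Φ)ᴴ * Matrix.of Φ)).trace)

lemma integrable_one_add_norm_pow_mul_gaussian (k : ℕ) (c : ℝ) (hc : 0 < c) :
    Integrable (fun z : ℂ => (1 + ‖z‖) ^ k * Real.exp (-(c * ‖z‖ ^ 2))) := by
  have h3 : Integrable (fun z : ℂ => (1 + ‖z‖) ^ (-(3 : ℝ))) :=
    integrable_one_add_norm (by simp [Complex.finrank_real_complex]; norm_num)
  -- `(1+t)^(k+3) ≤ (k+3)! exp (1+t)` and `1 + t - c t² ≤ 1 + 1/(4c)`.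
  refine (h3.const_mul ((k + 3).factorial * Real.exp (1 + 1 / (4 * c)))).mono'
    (Continuous.aestronglyMeasurable (by fun_prop)) (Filter.Eventually.of_forall fun z => ?_)
  have ht : 0 ≤ ‖z‖ := norm_nonneg z
  generalize ‖z‖ = t at ht
  have h1 : 0 < 1 + t := by positivity
  rw [Real.norm_of_nonneg (by positivity), Real.rpow_neg h1.le, ← div_eq_mul_inv,
    le_div_iff₀ (by positivity)]
  have h2 := Real.pow_div_factorial_le_exp (1 + t) h1.le (k + 3)
  rw [div_le_iff₀ (by positivity)] at h2
  have h4 : 1 + t - c * t ^ 2 ≤ 1 + 1 / (4 * c) := by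
    have : 1 / (4 * c) - t + c * t ^ 2 = c * (t - 1 / (2 * c)) ^ 2 := by
      field_simp; ring
    have : 0 ≤ c * (t - 1 / (2 * c)) ^ 2 := by positivity
    linarith
  have h5 : (1 + t) ^ (3 : ℝ) = (1 + t) ^ 3 := by exact_mod_cast Real.rpow_natCast (1 + t) 3
  calc (1 + t) ^ k * Real.exp (-(c * t ^ 2)) * (1 + t) ^ (3 : ℝ)
      = (1 + t) ^ (k + 3) * Real.exp (-(c * t ^ 2)) := by rw [h5]; ring
    _ ≤ (Real.exp (1 + t) * (k + 3).factorial) * Real.exp (-(c * t ^ 2)) := by gcongr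
    _ = (k + 3).factorial * Real.exp (1 + t - c * t ^ 2) := by
        rw [sub_eq_add_neg, Real.exp_add (1 + t)]; ring
    _ ≤ _ := by gcongr

open scoped ComplexOrder in
lemma lszAction_re_ge (N : ℕ) (E Et : Fin N → ℝ) (lam : ℝ) (hlam : 0 ≤ lam)
    (Φ : Fin N → Fin N → ℂ) :
    ∑ a, ∑ b, (E a + Et b) * ‖Φ a b‖ ^ 2 ≤ (lszAction N E Et lam Φ).re := by
  have htr : 0 ≤ ((((Matrix.of Φ)ᴴ * Matrix.of Φ) * ((Matrix.of Φ)ᴴ * Matrix.of Φ)).trace) := by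
    have h := (Matrix.posSemidef_conjTranspose_mul_self ((Matrix.of Φ)ᴴ * Matrix.of Φ)).trace_nonneg
    simpa [Matrix.conjTranspose_mul] using h
  have hre := (Complex.nonneg_iff.1 htr).1
  unfold lszAction
  rw [Complex.add_re, Complex.re_ofReal_mul]
  have : 0 ≤ lam / 2 * ((((Matrix.of Φ)ᴴ * Matrix.of Φ) *
      ((Matrix.of Φ)ᴴ * Matrix.of Φ)).trace).re := by positivity
  simp only [Complex.re_sum, ← Complex.ofReal_mul, Complex.ofReal_re, Complex.normSq_eq_norm_sq]
  linarith

/-- The monomial `Φ_{n₁m₁}⋯Φ_{n_rm_r} · conj Φ_{n'₁m'₁}⋯conj Φ_{n'_sm'_s}` times the Boltzmann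
weight `exp (-N S(Φ))`. -/
noncomputable def lszIntegrand (N r s : ℕ) (E Et : Fin N → ℝ) (lam : ℝ)
    (n m : Fin r → Fin N) (n' m' : Fin s → Fin N) (Φ : Fin N → Fin N → ℂ) : ℂ :=
  (∏ i, Φ (n i) (m i)) * (∏ j, (starRingEnd ℂ) (Φ (n' j) (m' j))) *
    Complex.exp (-(N : ℂ) * lszAction N E Et lam Φ)

lemma continuous_lszIntegrand (N r s : ℕ) (E Et : Fin N → ℝ) (lam : ℝ)
    (n m : Fin r → Fin N) (n' m' : Fin s → Fin N) :
    Continuous (lszIntegrand N r s E Et lam n m n' m') := by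
  unfold lszIntegrand lszAction
  simp only [Matrix.trace, Matrix.diag, Matrix.mul_apply, Matrix.conjTranspose_apply,
    Matrix.of_apply, Complex.normSq_eq_norm_sq]
  fun_prop

lemma integrable_lszIntegrand (N r s : ℕ) (hN : 1 ≤ N) (E Et : Fin N → ℝ)
    (hE : ∀ n, 0 < E n) (hEt : ∀ n, 0 < Et n) (lam : ℝ) (hlam : 0 ≤ lam)
    (n m : Fin r → Fin N) (n' m' : Fin s → Fin N) :
    Integrable (lszIntegrand N r s E Et lam n m n' m') := by
  have hdom : Integrable (fun Φ : Fin N → Fin N → ℂ => ∏ a, ∏ b,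
      ((1 + ‖Φ a b‖) ^ (r + s) * Real.exp (-((N * (E a + Et b)) * ‖Φ a b‖ ^ 2)))) := by
    refine Integrable.fintype_prod (f := fun a (v : Fin N → ℂ) => ∏ b,
      ((1 + ‖v b‖) ^ (r + s) * Real.exp (-((N * (E a + Et b)) * ‖v b‖ ^ 2)))) fun a => ?_
    refine Integrable.fintype_prod (f := fun b (z : ℂ) =>
      ((1 + ‖z‖) ^ (r + s) * Real.exp (-((N * (E a + Et b)) * ‖z‖ ^ 2)))) fun b => ?_
    have := hE a
    have := hEt b
    have : (0 : ℝ) < N := by exact_mod_cast hN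
    exact integrable_one_add_norm_pow_mul_gaussian _ _ (by positivity)
  refine hdom.mono' (continuous_lszIntegrand ..).aestronglyMeasurable
    (Filter.Eventually.of_forall fun Φ => ?_)
  set P : ℝ := ∏ a, ∏ b, (1 + ‖Φ a b‖) with hP
  have hentry : ∀ a b, ‖Φ a b‖ ≤ P := by
    intro a b
    have h1 : ∀ a b, 1 ≤ 1 + ‖Φ a b‖ := fun a b => by simp
    have h2 : ∀ a, 1 ≤ ∏ b, (1 + ‖Φ a b‖) := fun a => Finset.one_le_prod (fun b _ => h1 a b)
    calc ‖Φ a b‖ ≤ 1 + ‖Φ a b‖ := by simp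
      _ ≤ ∏ b, (1 + ‖Φ a b‖) := by
        rw [← Finset.mul_prod_erase _ _ (Finset.mem_univ b)]
        exact le_mul_of_one_le_right (by positivity) (Finset.one_le_prod (fun b _ => h1 a b))
      _ ≤ P := by
        rw [hP, ← Finset.mul_prod_erase _ (fun a => ∏ b, (1 + ‖Φ a b‖)) (Finset.mem_univ a)]
        exact le_mul_of_one_le_right (by positivity) (Finset.one_le_prod (fun a _ => h2 a))
  have hexp : ‖Complex.exp (-(N : ℂ) * lszAction N E Et lam Φ)‖ ≤
      Real.exp (∑ a, ∑ b, -((N * (E a + Et b)) * ‖Φ a b‖ ^ 2)) := by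
    rw [Complex.norm_exp, Real.exp_le_exp]
    have h := mul_le_mul_of_nonneg_left (lszAction_re_ge N E Et lam hlam Φ)
      (Nat.cast_nonneg (α := ℝ) N)
    have h' : (-(N : ℂ) * lszAction N E Et lam Φ).re = -(N * (lszAction N E Et lam Φ).re) := by
      simp
    rw [h']
    simp only [Finset.sum_neg_distrib, neg_le_neg_iff]
    simpa only [Finset.mul_sum, mul_assoc] using h
  have hr : ‖∏ i, Φ (n i) (m i)‖ ≤ P ^ r := by
    rw [norm_prod]
    calc _ ≤ ∏ _i : Fin r, P := Finset.prod_le_prod (fun _ _ => norm_nonneg _)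
          fun _ _ => hentry _ _
      _ = P ^ r := by simp
  have hs : ‖∏ j, (starRingEnd ℂ) (Φ (n' j) (m' j))‖ ≤ P ^ s := by
    rw [norm_prod]
    calc _ ≤ ∏ _i : Fin s, P := Finset.prod_le_prod (fun _ _ => norm_nonneg _)
          fun _ _ => by simpa using hentry _ _
      _ = P ^ s := by simp
  have hP0 : 0 ≤ P := by positivity
  unfold lszIntegrand
  rw [norm_mul, norm_mul]
  calc _ ≤ P ^ r * P ^ s * Real.exp (∑ a, ∑ b, -((N * (E a + Et b)) * ‖Φ a b‖ ^ 2)) := by gcongr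
    _ = _ := by
      simp only [Finset.prod_mul_distrib, Finset.prod_pow, Real.exp_sum, hP, pow_add]

lemma measurePreserving_phase (N : ℕ) (d e : Fin N → Circle) :
    MeasurePreserving (fun (Φ : Fin N → Fin N → ℂ) a b => (d a * e b : ℂ) * Φ a b) := by
  refine volume_preserving_pi (f := fun a (v : Fin N → ℂ) b => (d a * e b : ℂ) * v b) fun a => ?_
  refine volume_preserving_pi (f := fun b (z : ℂ) => (d a * e b : ℂ) * z) fun b => ?_
  exact (rotation (d a * e b)).measurePreserving

lemma lszAction_phase (N : ℕ) (E Et : Fin N → ℝ) (lam : ℝ) (d e : Fin N → Circle)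
    (Φ : Fin N → Fin N → ℂ) :
    lszAction N E Et lam (fun a b => (d a * e b : ℂ) * Φ a b) = lszAction N E Et lam Φ := by
  have hu : ∀ u : Circle, (starRingEnd ℂ) (u : ℂ) * u = 1 := fun u => by
    rw [mul_comm, Complex.mul_conj]; simp
  unfold lszAction
  congr 1
  · simp only [Complex.normSq_mul, Circle.normSq_coe, one_mul]
  · congr 1
    have hgram : ∀ b c, ((Matrix.of fun a b => (d a * e b : ℂ) * Φ a b)ᴴ *
        (Matrix.of fun a b => (d a * e b : ℂ) * Φ a b)) b c =
        (starRingEnd ℂ) (e b) * e c * ((Matrix.of Φ)ᴴ * Matrix.of Φ) b c := by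
      intro b c
      simp only [Matrix.mul_apply, Matrix.conjTranspose_apply, Matrix.of_apply, Finset.mul_sum,
        Complex.star_def, map_mul]
      refine Finset.sum_congr rfl fun a _ => ?_
      linear_combination (starRingEnd ℂ (e b) * starRingEnd ℂ (Φ a b) * e c * Φ a c) * hu (d a)
    simp only [Matrix.trace, Matrix.diag]
    refine Finset.sum_congr rfl fun b _ => ?_
    rw [Matrix.mul_apply, Matrix.mul_apply]
    refine Finset.sum_congr rfl fun c _ => ?_
    rw [hgram, hgram]
    generalize ((Matrix.of Φ)ᴴ * Matrix.of Φ) b c = x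
    generalize ((Matrix.of Φ)ᴴ * Matrix.of Φ) c b = y
    linear_combination (x * y * (starRingEnd ℂ (e c) * e c)) * hu (e b) + x * y * hu (e c)

/-- A moment vanishes as soon as some choice of phases multiplies its monomial by `-1`. -/
lemma integral_lszIntegrand_eq_zero (N r s : ℕ) (E Et : Fin N → ℝ) (lam : ℝ)
    (n m : Fin r → Fin N) (n' m' : Fin s → Fin N) (d e : Fin N → Circle)
    (hde : (∏ i, (d (n i) : ℂ)) * (∏ j, (starRingEnd ℂ) (d (n' j) : ℂ)) *
      ((∏ i, (e (m i) : ℂ)) * (∏ j, (starRingEnd ℂ) (e (m' j) : ℂ))) = -1) :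
    ∫ Φ, lszIntegrand N r s E Et lam n m n' m' Φ = 0 := by
  have hmp := measurePreserving_phase N d e
  have hint := integral_map (μ := volume) hmp.measurable.aemeasurable
    (f := lszIntegrand N r s E Et lam n m n' m')
    (continuous_lszIntegrand ..).aestronglyMeasurable
  rw [hmp.map_eq] at hint
  have hneg : ∀ Φ : Fin N → Fin N → ℂ,
      lszIntegrand N r s E Et lam n m n' m' (fun a b => (d a * e b : ℂ) * Φ a b) =
        -lszIntegrand N r s E Et lam n m n' m' Φ := by
    intro Φ
    unfold lszIntegrand
    rw [lszAction_phase]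
    simp only [map_mul, Finset.prod_mul_distrib]
    linear_combination ((∏ i, Φ (n i) (m i)) * (∏ j, (starRingEnd ℂ) (Φ (n' j) (m' j))) *
      Complex.exp (-(N : ℂ) * lszAction N E Et lam Φ)) * hde
  simp only [hneg, integral_neg] at hint
  exact self_eq_neg.1 hint

lemma prod_ite_eq_pow_count {M : Type*} [CommMonoid M] {N r : ℕ} (n : Fin r → Fin N) (a : Fin N)
    (u : M) : ∏ i, (if n i = a then u else 1) =
      u ^ Multiset.count a ((List.ofFn n : List (Fin N)) : Multiset (Fin N)) := by
  have h : ((List.ofFn n : List (Fin N)) : Multiset (Fin N)) = Finset.univ.val.map n := by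
    rw [List.ofFn_eq_map]; rfl
  rw [Finset.prod_ite, Finset.prod_const, Finset.prod_const_one, mul_one, h, Multiset.count_map]
  simp only [eq_comm]
  rfl

/-- Two distinct index multisets are separated by phases: rotating a single index `a` whose
multiplicities `k ≠ l` differ by the angle `π/(k - l)` yields the total factor `-1`. -/
lemma exists_phase {N r s : ℕ} (n : Fin r → Fin N) (n' : Fin s → Fin N)
    (h : ((List.ofFn n : List (Fin N)) : Multiset (Fin N)) ≠ (List.ofFn n' : List (Fin N))) :
    ∃ d : Fin N → Circle,
      (∏ i, (d (n i) : ℂ)) * (∏ j, (starRingEnd ℂ) (d (n' j) : ℂ)) = -1 := by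
  obtain ⟨a, ha⟩ : ∃ a, Multiset.count a ((List.ofFn n : List (Fin N)) : Multiset (Fin N)) ≠
      Multiset.count a ((List.ofFn n' : List (Fin N)) : Multiset (Fin N)) := by
    by_contra! hc
    exact h (Multiset.ext.2 hc)
  have hn := prod_ite_eq_pow_count (M := ℂ) n a
  have hn' := prod_ite_eq_pow_count (M := ℂ) n' a
  generalize Multiset.count a ((List.ofFn n : List (Fin N)) : Multiset (Fin N)) = k at *
  generalize Multiset.count a ((List.ofFn n' : List (Fin N)) : Multiset (Fin N)) = l at *
  have hkl : (k : ℂ) - l ≠ 0 := sub_ne_zero.2 (by exact_mod_cast ha)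
  refine ⟨fun x => if x = a then Circle.exp (Real.pi / (k - l)) else 1, ?_⟩
  have hd : ∀ x : Fin N, (((if x = a then Circle.exp (Real.pi / (k - l)) else 1 : Circle)) : ℂ) =
      if x = a then Complex.exp ((Real.pi / (k - l) : ℝ) * Complex.I) else 1 := by
    intro x
    split_ifs <;> simp
  simp only [hd, apply_ite (starRingEnd ℂ), map_one, hn, hn', ← Complex.exp_conj, map_mul,
    Complex.conj_ofReal, Complex.conj_I, ← Complex.exp_nat_mul, ← Complex.exp_add]
  rw [← Complex.exp_pi_mul_I]
  congr 1
  push_cast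
  field_simp
  ring

/-- If the multiset of row indices (or of column indices) of the
`Φ`-factors differs from that of the `conj Φ`-factors, then the corresponding moment
of the LSZ model vanishes (and the integral converges absolutely). -/
theorem lsz_unbalanced_moments_vanish
    (N r s : ℕ) (hN : 1 ≤ N) (E Et : Fin N → ℝ)
    (hE : ∀ n, 0 < E n) (hEt : ∀ n, 0 < Et n) (lam : ℝ) (hlam : 0 ≤ lam)
    (n m : Fin r → Fin N) (n' m' : Fin s → Fin N)
    (h : ((List.ofFn n : List (Fin N)) : Multiset (Fin N)) ≠ (List.ofFn n' : List (Fin N))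
      ∨ ((List.ofFn m : List (Fin N)) : Multiset (Fin N)) ≠ (List.ofFn m' : List (Fin N))) :
    Integrable (fun Φ : Fin N → Fin N → ℂ =>
      (∏ i, Φ (n i) (m i)) * (∏ j, (starRingEnd ℂ) (Φ (n' j) (m' j))) *
        Complex.exp (-(N : ℂ) * lszAction N E Et lam Φ)) ∧
    (∫ Φ : Fin N → Fin N → ℂ,
      (∏ i, Φ (n i) (m i)) * (∏ j, (starRingEnd ℂ) (Φ (n' j) (m' j))) *
        Complex.exp (-(N : ℂ) * lszAction N E Et lam Φ)) = 0 := by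
  refine ⟨integrable_lszIntegrand N r s hN E Et hE hEt lam hlam n m n' m', ?_⟩
  rcases h with h | h
  · obtain ⟨d, hd⟩ := exists_phase n n' h
    exact integral_lszIntegrand_eq_zero N r s E Et lam n m n' m' d 1 (by simpa using hd)
  · obtain ⟨e, he⟩ := exists_phase m m' h
    exact integral_lszIntegrand_eq_zero N r s E Et lam n m n' m' 1 e (by simpa using he)
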